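/- (Lower-bound propagation step.) Let $1\le k\le n$ be integers and $U=\{1,\dots,n\}$; each item $a\in U$ has a utility $u_a\in\mathbb R$ and a consideration probability $p_a\in(0,1]$. A length-$k$ ranking is a tuple $r=(r_1,\dots,r_k)$ of distinct items of $U$. For $C\subseteq U$ put $$\Pr\nolimits_{\mathrm{PL}}(r\mid C)=\prod_{s=1}^{k}\frac{\exp(u_{r_s})}{\sum_{t\in C\setminus\{r_1,\dots,r_{s-1}\}}\exp(u_t)}\quad\text{if }\{r_1,\dots,r_k\}\subseteq C,$$ and $\Pr_{\mathrm{PL}}(r\mid C)=0$ otherwise. Let $w(C)=\prod_{a\in C}p_a\prod_{a\in U\setminus C}(1-p_a)$, and let $\Pr_{\mathrm C}(C)=w(C)/\sum_{C'\subseteq U,\,|C'|\ge k}w(C')$ if $|C|\ge k$ and $\Pr_{\mathrm C}(C)=0$ if $|C|<k$. The PL+C (Plackett--Luce with consideration) probability of $r$ is $\Pr_{\mathrm{PL+C}}(r)=\sum_{C\subseteq U}\Pr_{\mathrm C}(C)\Pr_{\mathrm{PL}}(r\mid C)$, and $\Pr_{\mathrm{PL+C}}(R)=\sum_{r\in R}\Pr_{\mathrm{PL+C}}(r)$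 for a set $R$ of rankings. Let $R_{a\le\ell}$ be the set of length-$k$ rankings that contain item $a$ in one of the first $\ell$ positions. Let $i,j\in U$ with $u_i>u_j$. Suppose that $$c=\frac{\Pr_{\mathrm{PL+C}}(R_{i\le\ell})}{\Pr_{\mathrm{PL+C}}(R_{j\le\ell})}\le 1$$ for some integer $\ell$ with $1\le\ell\le k$ and $\ell<n$ (that is, any $1\le\ell\le k$, except that $\ell=k=n$ is excluded), and that $b_i\in[0,1)$ satisfies $b_i\le p_i$. Then $$p_j\ \ge\ \frac{b_i}{c-c\,b_i+b_i}.$$ -/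

import Mathlib

noncomputable section

/-- Unnormalized weight of a consideration set `C`: each item `i ∈ C` is considered
(factor `p i`), each item `j ∉ C` is not (factor `1 - p j`). -/
def considerWeight (n : ℕ) (p : Fin n → ℝ) (C : Finset (Fin n)) : ℝ :=
  (∏ i ∈ C, p i) * ∏ j ∈ Cᶜ, (1 - p j)

/-- Normalizing constant `z_{k,p}`: total weight of consideration sets of size at least `k`. -/
def zConst (n k : ℕ) (p : Fin n → ℝ) : ℝ :=
  ∑ C ∈ Finset.univ.filter (fun C : Finset (Fin n) => k ≤ C.card), considerWeight n p C

/-- Probability of the consideration set `C`, conditioned on `|C| ≥ k`. -/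
def prC (n k : ℕ) (p : Fin n → ℝ) (C : Finset (Fin n)) : ℝ :=
  if k ≤ C.card then considerWeight n p C / zConst n k p else 0

/-- Plackett–Luce probability of the length-`k` ranking `r` given the consideration set `C`.
A ranking is an injection `Fin k ↪ Fin n`; position `t` (counted from `0`) holds item `r t`. -/
def prPL (n k : ℕ) (u : Fin n → ℝ) (r : Fin k ↪ Fin n) (C : Finset (Fin n)) : ℝ :=
  if ∀ t : Fin k, r t ∈ C then
    ∏ t : Fin k, Real.exp (u (r t)) /
      ∑ j ∈ C \ (Finset.Iio t).image r, Real.exp (u j)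
  else 0

/-- Plackett–Luce-with-consideration (PL+C) probability of the ranking `r`. -/
def prPLC (n k : ℕ) (u p : Fin n → ℝ) (r : Fin k ↪ Fin n) : ℝ :=
  ∑ C : Finset (Fin n), prC n k p C * prPL n k u r C

/-- PL+C probability of a set of rankings. -/
def prPLCset (n k : ℕ) (u p : Fin n → ℝ) (R : Finset (Fin k ↪ Fin n)) : ℝ :=
  ∑ r ∈ R, prPLC n k u p r

/-- `R_{i≤ℓ}`: the set of length-`k` rankings with item `i` among the top `ℓ` positions. -/
def topSet (n k : ℕ) (i : Fin n) (ℓ : ℕ) : Finset (Fin k ↪ Fin n) :=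
  Finset.univ.filter (fun r => ∃ t : Fin k, (t : ℕ) < ℓ ∧ r t = i)

end

/-!
Drawing items successively without replacement, moving weight away from `i` onto the other items
makes it more likely that `i` is missed: a draw other than `i` gains probability at every stage.
Let `σ` be the transposition of `i` and `j`. Since `u i > u j`, this shows that `i` reaches the
top `ℓ` positions from a consideration set `C ∋ i` at least as likely as `j` does from `σ C`.

Passing from `C` to `σ C` fixes the weight if `C` contains both items, and exchanges the factor
`p i * (1 - p j)` for `p j * (1 - p i)` if it contains only `i`. If `p i * (1 - p j)` were at
least `c * (p j * (1 - p i))`, then pairing `C` with `σ C` would give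
`c * Pr(R_{j≤ℓ}) < Pr(R_{i≤ℓ})`, with strictness from `C = U`. Hence
`p i * (1 - p j) < c * (p j * (1 - p i))`, and the bound follows.
-/

section WeightedSampling

variable {α β : Type*} [DecidableEq α] [DecidableEq β] {v w : α → ℝ} {i j : α}

/-- The probability that `m` successive draws without replacement from `C`, each proportional to
the weights `v`, all miss the item `i`; it is `0` if `C` has fewer than `m` items. -/
noncomputable def avoidProb (v : α → ℝ) (i : α) : ℕ → Finset α → ℝ
  | 0, _ => 1
  | m + 1, C => ∑ a ∈ C.erase i, v a / (∑ b ∈ C, v b) * avoidProb v i m (C.erase a)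

theorem avoidProb_nonneg (hv : ∀ a, 0 ≤ v a) (i : α) (m : ℕ) (C : Finset α) :
    0 ≤ avoidProb v i m C := by
  induction m generalizing C with
  | zero => exact zero_le_one
  | succ m ih =>
    exact Finset.sum_nonneg fun a _ =>
      mul_nonneg (div_nonneg (hv a) (Finset.sum_nonneg fun b _ => hv b)) (ih _)

theorem avoidProb_pos (hv : ∀ a, 0 < v a) {m : ℕ} {C : Finset α} (hm : m ≤ (C.erase i).card) :
    0 < avoidProb v i m C := by
  induction m generalizing C with
  | zero => exact zero_lt_one
  | succ m ih =>
    refine Finset.sum_pos (fun a ha => ?_) (Finset.card_pos.mp (by lia))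
    have hm' : m ≤ ((C.erase a).erase i).card := by
      rw [Finset.erase_right_comm, Finset.card_erase_of_mem ha]
      lia
    have hC : 0 < ∑ b ∈ C, v b :=
      Finset.sum_pos (fun b _ => hv b) ⟨a, Finset.mem_of_mem_erase ha⟩
    exact mul_pos (div_pos (hv a) hC) (ih hm')

theorem avoidProb_map_equiv (σ : α ≃ β) (v : β → ℝ) (i : α) (m : ℕ) (C : Finset α) :
    avoidProb v (σ i) m (C.map σ.toEmbedding) = avoidProb (v ∘ σ) i m C := by
  induction m generalizing C with
  | zero => rfl
  | succ m ih =>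
    have herase (a : α) :
        (C.map σ.toEmbedding).erase (σ a) = (C.erase a).map σ.toEmbedding :=
      (Finset.map_erase σ.toEmbedding C a).symm
    simp only [avoidProb, herase, Finset.sum_map, Equiv.coe_toEmbedding, ih, Function.comp_apply]

theorem sum_erase_le_sum_erase {C : Finset α} {a : α} (hsum : ∑ b ∈ C, w b ≤ ∑ b ∈ C, v b)
    (ha : a ∈ C) (hvw : v a ≤ w a) : ∑ b ∈ C.erase a, w b ≤ ∑ b ∈ C.erase a, v b := by
  linarith [Finset.add_sum_erase C v ha, Finset.add_sum_erase C w ha]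

theorem avoidProb_le_avoidProb (hv : ∀ a, 0 ≤ v a) (hw : ∀ a, 0 < w a) (m : ℕ) {C : Finset α}
    (hvw : ∀ a ∈ C.erase i, v a ≤ w a) (hsum : ∑ a ∈ C, w a ≤ ∑ a ∈ C, v a) :
    avoidProb v i m C ≤ avoidProb w i m C := by
  induction m generalizing C with
  | zero => exact le_rfl
  | succ m ih =>
    refine Finset.sum_le_sum fun a ha => ?_
    have haC : a ∈ C := Finset.mem_of_mem_erase ha
    have hrest : avoidProb v i m (C.erase a) ≤ avoidProb w i m (C.erase a) :=
      ih (fun x hx => hvw x (Finset.erase_subset_erase i (Finset.erase_subset a C) hx))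
        (sum_erase_le_sum_erase hsum haC (hvw a ha))
    have hC : 0 < ∑ b ∈ C, w b := Finset.sum_pos (fun b _ => hw b) ⟨a, haC⟩
    exact mul_le_mul (div_le_div₀ (hw a).le (hvw a ha) hC hsum) hrest
      (avoidProb_nonneg hv _ _ _) (div_nonneg (hw a).le hC.le)

theorem avoidProb_succ_lt_avoidProb_succ (hv : ∀ a, 0 < v a) (hw : ∀ a, 0 < w a) {m : ℕ}
    {C : Finset α} (hm : m + 1 ≤ (C.erase i).card) (hvw : ∀ a ∈ C.erase i, v a ≤ w a)
    (hlt : ∃ a ∈ C.erase i, v a < w a) (hsum : ∑ a ∈ C, w a ≤ ∑ a ∈ C, v a) :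
    avoidProb v i (m + 1) C < avoidProb w i (m + 1) C := by
  have hrest : ∀ a ∈ C.erase i, avoidProb v i m (C.erase a) ≤ avoidProb w i m (C.erase a) :=
    fun a ha => avoidProb_le_avoidProb (fun b => (hv b).le) hw m
      (fun x hx => hvw x (Finset.erase_subset_erase i (Finset.erase_subset a C) hx))
      (sum_erase_le_sum_erase hsum (Finset.mem_of_mem_erase ha) (hvw a ha))
  have hC : C.Nonempty := (Finset.card_pos.mp (by lia)).mono (Finset.erase_subset i C)
  have hwC : 0 < ∑ b ∈ C, w b := Finset.sum_pos (fun b _ => hw b) hC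
  refine Finset.sum_lt_sum (fun a ha => ?_) ?_
  · exact mul_le_mul (div_le_div₀ (hw a).le (hvw a ha) hwC hsum) (hrest a ha)
      (avoidProb_nonneg (fun b => (hv b).le) _ _ _) (div_nonneg (hw a).le hwC.le)
  · obtain ⟨a, ha, hva⟩ := hlt
    have hpos : 0 < avoidProb v i m (C.erase a) := by
      refine avoidProb_pos hv ?_
      rw [Finset.erase_right_comm, Finset.card_erase_of_mem ha]
      lia
    exact ⟨a, ha, mul_lt_mul (div_lt_div₀ hva hsum (hw a).le hwC) (hrest a ha) hpos
      (div_nonneg (hw a).le hwC.le)⟩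

theorem map_swap_of_mem_of_mem {C : Finset α} (hi : i ∈ C) (hj : j ∈ C) :
    C.map (Equiv.swap i j).toEmbedding = C :=
  Finset.map_perm fun a ha => by
    rcases Equiv.swap_apply_ne_self_iff.mp ha with ⟨-, rfl | rfl⟩ <;> assumption

theorem map_swap_of_mem_of_notMem {C : Finset α} (hi : i ∈ C) (hj : j ∉ C) :
    C.map (Equiv.swap i j).toEmbedding = insert j (C.erase i) := by
  ext a
  rw [Finset.mem_map_equiv, Equiv.symm_swap, Finset.mem_insert, Finset.mem_erase]
  rcases eq_or_ne a i with rfl | hai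
  · simp [hj, ne_of_mem_of_not_mem hi hj]
  rcases eq_or_ne a j with rfl | haj
  · simp [hi]
  · simp [Equiv.swap_apply_of_ne_of_ne hai haj, hai, haj]

theorem le_apply_swap (hij : v j ≤ v i) {a : α} (ha : a ≠ i) : v a ≤ v (Equiv.swap i j a) := by
  rcases eq_or_ne a j with rfl | haj
  · rwa [Equiv.swap_apply_right]
  · rw [Equiv.swap_apply_of_ne_of_ne ha haj]

theorem sum_comp_swap_le (hij : v j ≤ v i) {C : Finset α} (hi : i ∈ C) :
    ∑ a ∈ C, v (Equiv.swap i j a) ≤ ∑ a ∈ C, v a := by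
  have hmap : ∑ a ∈ C, v (Equiv.swap i j a) = ∑ a ∈ C.map (Equiv.swap i j).toEmbedding, v a :=
    (Finset.sum_map C (Equiv.swap i j).toEmbedding v).symm
  by_cases hj : j ∈ C
  · rw [hmap, map_swap_of_mem_of_mem hi hj]
  · rw [hmap, map_swap_of_mem_of_notMem hi hj, Finset.sum_insert (by simp [hj]),
      ← Finset.add_sum_erase C v hi]
    gcongr

theorem avoidProb_le_avoidProb_map_swap (hv : ∀ a, 0 < v a) (hij : v j ≤ v i) (m : ℕ)
    {C : Finset α} (hi : i ∈ C) :
    avoidProb v i m C ≤ avoidProb v j m (C.map (Equiv.swap i j).toEmbedding) := by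
  have hmap := avoidProb_map_equiv (Equiv.swap i j) v i m C
  rw [Equiv.swap_apply_left] at hmap
  rw [hmap]
  exact avoidProb_le_avoidProb (fun a => (hv a).le) (fun a => hv _) m
    (fun a ha => le_apply_swap hij (Finset.ne_of_mem_erase ha)) (sum_comp_swap_le hij hi)

theorem avoidProb_succ_lt_avoidProb_succ_of_lt (hv : ∀ a, 0 < v a) (hij : v j < v i) {m : ℕ}
    {C : Finset α} (hi : i ∈ C) (hj : j ∈ C) (hm : m + 1 < C.card) :
    avoidProb v i (m + 1) C < avoidProb v j (m + 1) C := by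
  have hmap := avoidProb_map_equiv (Equiv.swap i j) v i (m + 1) C
  rw [Equiv.swap_apply_left, map_swap_of_mem_of_mem hi hj] at hmap
  have hji : j ≠ i := fun h => hij.ne (congrArg v h)
  have hm' : m + 1 ≤ (C.erase i).card := by
    rw [Finset.card_erase_of_mem hi]
    lia
  rw [hmap]
  exact avoidProb_succ_lt_avoidProb_succ hv (fun a => hv _) hm'
    (fun a ha => le_apply_swap hij.le (Finset.ne_of_mem_erase ha))
    ⟨j, Finset.mem_erase.mpr ⟨hji, hj⟩, by simpa using hij⟩ (sum_comp_swap_le hij.le hi)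

end WeightedSampling

section PlackettLuce

variable {n k ℓ : ℕ} {u : Fin n → ℝ} {i j : Fin n} {C : Finset (Fin n)}

theorem prPL_nonneg (u : Fin n → ℝ) (r : Fin k ↪ Fin n) (C : Finset (Fin n)) :
    0 ≤ prPL n k u r C := by
  unfold prPL
  split_ifs <;> positivity

theorem prPL_pos (u : Fin n → ℝ) (r : Fin k ↪ Fin n) (hr : ∀ t, r t ∈ C) :
    0 < prPL n k u r C := by
  rw [prPL, if_pos hr]
  refine Finset.prod_pos fun t _ => div_pos (Real.exp_pos _) ?_
  exact Finset.sum_pos (fun a _ => Real.exp_pos _) ⟨r t, by simp [hr t]⟩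

theorem prPL_erase_apply (u : Fin n → ℝ) (r : Fin k ↪ Fin n) (t : Fin k) (C : Finset (Fin n)) :
    prPL n k u r (C.erase (r t)) = 0 :=
  if_neg fun h => Finset.notMem_erase (r t) C (h t)

theorem image_Iio_succ (r : Fin (k + 1) ↪ Fin n) (t : Fin k) :
    (Finset.Iio t.succ).image r =
      insert (r 0) ((Finset.Iio t).image (Fin.Embedding.tail r)) := by
  ext a
  simp [Fin.exists_fin_succ, Fin.tail, eq_comm]

theorem prPL_succ (u : Fin n → ℝ) (r : Fin (k + 1) ↪ Fin n) (C : Finset (Fin n)) :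
    prPL n (k + 1) u r C =
      (if r 0 ∈ C then Real.exp (u (r 0)) / ∑ a ∈ C, Real.exp (u a) else 0) *
        prPL n k u (Fin.Embedding.tail r) (C.erase (r 0)) := by
  have hsub : (∀ t, r t ∈ C) ↔
      r 0 ∈ C ∧ ∀ t, Fin.Embedding.tail r t ∈ C.erase (r 0) := by
    simp [Fin.forall_fin_succ, Fin.tail]
  have hrest (t : Fin k) : C \ (Finset.Iio t.succ).image r =
      C.erase (r 0) \ (Finset.Iio t).image (Fin.Embedding.tail r) := by
    rw [image_Iio_succ, Finset.sdiff_insert, Finset.erase_sdiff_comm]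
  have hfirst : (Finset.Iio (0 : Fin (k + 1))).image r = ∅ := by
    rw [← bot_eq_zero, Finset.Iio_bot, Finset.image_empty]
  have htail (t : Fin k) : r t.succ = Fin.Embedding.tail r t := rfl
  simp only [prPL, hsub, ite_and, Fin.prod_univ_succ, hrest, hfirst, Finset.sdiff_empty, htail,
    mul_ite, ite_mul, mul_zero, zero_mul]
  split_ifs <;> rfl

theorem sum_prPL_succ_mul (u : Fin n → ℝ) (C : Finset (Fin n))
    (f : Fin n → (Fin k ↪ Fin n) → ℝ) :
    ∑ r, prPL n (k + 1) u r C * f (r 0) (Fin.Embedding.tail r) =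
      ∑ a ∈ C, Real.exp (u a) / (∑ b ∈ C, Real.exp (u b)) *
        ∑ r, prPL n k u r (C.erase a) * f a r := by
  let q (a : Fin n) : ℝ := if a ∈ C then Real.exp (u a) / ∑ b ∈ C, Real.exp (u b) else 0
  let F (r : Fin k ↪ Fin n) (a : Fin n) : ℝ := q a * prPL n k u r (C.erase a) * f a r
  have hrange (r : Fin k ↪ Fin n) : ∑ a : {a // a ∉ Set.range r}, F r a = ∑ a, F r a := by
    have hzero (a : {a // a ∈ Set.range r}) : F r a = 0 := by
      obtain ⟨_, t, rfl⟩ := a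
      simp [F, prPL_erase_apply]
    rw [← Fintype.sum_subtype_add_sum_subtype (· ∈ Set.range r) (F r),
      Finset.sum_eq_zero fun a _ => hzero a, zero_add]
  calc ∑ r, prPL n (k + 1) u r C * f (r 0) (Fin.Embedding.tail r)
      = ∑ x : Σ r : Fin k ↪ Fin n, {a // a ∉ Set.range r}, F x.1 x.2 :=
        Fintype.sum_equiv (Equiv.embeddingFinSucc k (Fin n)) _ _ fun r => by
          rw [prPL_succ]
          rfl
    _ = ∑ r, ∑ a, F r a := by
        rw [Fintype.sum_sigma]
        exact Finset.sum_congr rfl fun r _ => hrange r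
    _ = ∑ a, q a * ∑ r, prPL n k u r (C.erase a) * f a r := by
        simp only [Finset.sum_comm (γ := Fin n), F, Finset.mul_sum, mul_assoc]
    _ = _ := by
        simp only [q, ite_mul, zero_mul, Finset.sum_ite_mem, Finset.univ_inter]

theorem sum_prPL (u : Fin n → ℝ) (hk : k ≤ C.card) : ∑ r, prPL n k u r C = 1 := by
  induction k generalizing C with
  | zero => simp [prPL]
  | succ k ih =>
    have hC : 0 < ∑ a ∈ C, Real.exp (u a) :=
      Finset.sum_pos (fun a _ => Real.exp_pos _) (Finset.card_pos.mp (by lia))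
    calc ∑ r, prPL n (k + 1) u r C
        = ∑ a ∈ C, Real.exp (u a) / (∑ b ∈ C, Real.exp (u b)) *
            ∑ r, prPL n k u r (C.erase a) := by
          simpa using sum_prPL_succ_mul (k := k) u C fun _ _ => 1
      _ = ∑ a ∈ C, Real.exp (u a) / (∑ b ∈ C, Real.exp (u b)) :=
          Finset.sum_congr rfl fun a ha => by
            rw [ih (by rw [Finset.card_erase_of_mem ha]; lia), mul_one]
      _ = 1 := by rw [← Finset.sum_div, div_self hC.ne']

theorem mem_compl_topSet_succ {r : Fin (k + 1) ↪ Fin n} :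
    r ∈ (topSet n (k + 1) i (ℓ + 1))ᶜ ↔
      r 0 ≠ i ∧ Fin.Embedding.tail r ∈ (topSet n k i ℓ)ᶜ := by
  simp [topSet, Fin.exists_fin_succ, Fin.tail]

theorem sum_prPL_compl_topSet (u : Fin n → ℝ) (i : Fin n) (hℓk : ℓ ≤ k) (hk : k ≤ C.card) :
    ∑ r ∈ (topSet n k i ℓ)ᶜ, prPL n k u r C = avoidProb (fun a => Real.exp (u a)) i ℓ C := by
  induction ℓ generalizing k C with
  | zero => simp [topSet, avoidProb, sum_prPL u hk]
  | succ ℓ ih =>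
    obtain ⟨k, rfl⟩ : ∃ k', k = k' + 1 := Nat.exists_eq_add_one.mpr (by lia)
    let miss (a : Fin n) (r : Fin k ↪ Fin n) : ℝ := if a ≠ i ∧ r ∈ (topSet n k i ℓ)ᶜ then 1 else 0
    have hmiss_self (D : Finset (Fin n)) : ∑ r, prPL n k u r D * miss i r = 0 := by
      simp [miss]
    have hmiss {a : Fin n} (ha : a ≠ i) (D : Finset (Fin n)) :
        ∑ r, prPL n k u r D * miss a r = ∑ r ∈ (topSet n k i ℓ)ᶜ, prPL n k u r D := by
      simp only [miss, ha, ne_eq, not_false_eq_true, true_and, mul_ite, mul_one, mul_zero,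
        Finset.sum_ite_mem, Finset.univ_inter]
    calc ∑ r ∈ (topSet n (k + 1) i (ℓ + 1))ᶜ, prPL n (k + 1) u r C
        = ∑ r, prPL n (k + 1) u r C * miss (r 0) (Fin.Embedding.tail r) := by
          simp only [miss, ← mem_compl_topSet_succ, mul_ite, mul_one, mul_zero,
            Finset.sum_ite_mem, Finset.univ_inter]
      _ = ∑ a ∈ C, Real.exp (u a) / (∑ b ∈ C, Real.exp (u b)) *
            ∑ r, prPL n k u r (C.erase a) * miss a r := sum_prPL_succ_mul u C miss
      _ = ∑ a ∈ C.erase i, Real.exp (u a) / (∑ b ∈ C, Real.exp (u b)) *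
            ∑ r, prPL n k u r (C.erase a) * miss a r :=
          (Finset.sum_erase C (by rw [hmiss_self, mul_zero])).symm
      _ = avoidProb (fun a => Real.exp (u a)) i (ℓ + 1) C :=
          Finset.sum_congr rfl fun a ha => by
            rw [hmiss (Finset.ne_of_mem_erase ha), ih (by lia)
              (by rw [Finset.card_erase_of_mem (Finset.mem_of_mem_erase ha)]; lia)]

/-- The Plackett–Luce probability, given the consideration set `C`, that item `i` is ranked among
the top `ℓ` positions. -/
noncomputable def topProb (n k : ℕ) (u : Fin n → ℝ) (i : Fin n) (ℓ : ℕ) (C : Finset (Fin n)) : ℝ :=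
  ∑ r ∈ topSet n k i ℓ, prPL n k u r C

theorem topProb_nonneg (u : Fin n → ℝ) (i : Fin n) (ℓ : ℕ) (C : Finset (Fin n)) :
    0 ≤ topProb n k u i ℓ C :=
  Finset.sum_nonneg fun r _ => prPL_nonneg u r C

theorem topProb_of_notMem (u : Fin n → ℝ) (ℓ : ℕ) (hi : i ∉ C) : topProb n k u i ℓ C = 0 := by
  refine Finset.sum_eq_zero fun r hr => if_neg fun hrC => ?_
  obtain ⟨t, -, rfl⟩ := (Finset.mem_filter.mp hr).2
  exact hi (hrC t)

theorem topProb_eq_one_sub_avoidProb (u : Fin n → ℝ) (i : Fin n) (hℓk : ℓ ≤ k)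
    (hk : k ≤ C.card) :
    topProb n k u i ℓ C = 1 - avoidProb (fun a => Real.exp (u a)) i ℓ C := by
  rw [← sum_prPL_compl_topSet u i hℓk hk, ← sum_prPL u hk,
    ← Finset.sum_add_sum_compl (topSet n k i ℓ), add_sub_cancel_right, topProb]

theorem topProb_map_swap_le (hij : u j ≤ u i) (hℓk : ℓ ≤ k) (hk : k ≤ C.card) :
    topProb n k u j ℓ (C.map (Equiv.swap i j).toEmbedding) ≤ topProb n k u i ℓ C := by
  by_cases hi : i ∈ C
  · rw [topProb_eq_one_sub_avoidProb u i hℓk hk,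
      topProb_eq_one_sub_avoidProb u j hℓk (by rwa [Finset.card_map])]
    exact sub_le_sub_left (avoidProb_le_avoidProb_map_swap (fun a => Real.exp_pos _)
      (Real.exp_le_exp.mpr hij) ℓ hi) 1
  · rw [topProb_of_notMem u ℓ hi, topProb_of_notMem u ℓ (by simpa using hi)]

theorem topProb_lt_topProb (hij : u j < u i) (hℓ : 1 ≤ ℓ) (hℓk : ℓ ≤ k) (hk : k ≤ C.card)
    (hℓC : ℓ < C.card) (hi : i ∈ C) (hj : j ∈ C) :
    topProb n k u j ℓ C < topProb n k u i ℓ C := by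
  obtain ⟨m, rfl⟩ := Nat.exists_eq_add_one.mpr hℓ
  rw [topProb_eq_one_sub_avoidProb u i hℓk hk, topProb_eq_one_sub_avoidProb u j hℓk hk]
  exact sub_lt_sub_left (avoidProb_succ_lt_avoidProb_succ_of_lt (fun a => Real.exp_pos _)
    (Real.exp_lt_exp.mpr hij) hi hj hℓC) 1

theorem topSet_nonempty (i : Fin n) (hℓ : 1 ≤ ℓ) (hℓk : ℓ ≤ k) (hkn : k ≤ n) :
    (topSet n k i ℓ).Nonempty := by
  let first : Fin k := ⟨0, by lia⟩
  let r : Fin k ↪ Fin n :=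
    (Fin.castLEEmb hkn).trans (Equiv.swap (Fin.castLE hkn first) i).toEmbedding
  exact ⟨r, Finset.mem_filter.mpr ⟨Finset.mem_univ r, first, hℓ, by simp [r]⟩⟩

theorem topProb_univ_pos (u : Fin n → ℝ) (i : Fin n) (hℓ : 1 ≤ ℓ) (hℓk : ℓ ≤ k) (hkn : k ≤ n) :
    0 < topProb n k u i ℓ Finset.univ :=
  Finset.sum_pos (fun r _ => prPL_pos u r fun _ => Finset.mem_univ _)
    (topSet_nonempty i hℓ hℓk hkn)

end PlackettLuce

section Consideration

variable {n k ℓ : ℕ} {u p : Fin n → ℝ} {i j : Fin n} {C : Finset (Fin n)} {c : ℝ}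

theorem considerWeight_nonneg (hp : ∀ a, 0 < p a ∧ p a ≤ 1) (C : Finset (Fin n)) :
    0 ≤ considerWeight n p C :=
  mul_nonneg (Finset.prod_nonneg fun a _ => (hp a).1.le)
    (Finset.prod_nonneg fun a _ => sub_nonneg.mpr (hp a).2)

theorem considerWeight_univ_pos (hp : ∀ a, 0 < p a) : 0 < considerWeight n p Finset.univ := by
  simpa [considerWeight] using Finset.prod_pos fun a _ => hp a

theorem considerWeight_of_mem_of_notMem (p : Fin n → ℝ) (hi : i ∈ C) (hj : j ∉ C) :
    considerWeight n p C = p i * (1 - p j) *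
      ((∏ a ∈ C.erase i, p a) * ∏ a ∈ Cᶜ.erase j, (1 - p a)) := by
  rw [considerWeight, ← Finset.mul_prod_erase C p hi,
    ← Finset.mul_prod_erase Cᶜ (fun a => 1 - p a) (Finset.mem_compl.mpr hj)]
  ring

theorem mul_considerWeight_map_swap_le (hp : ∀ a, 0 < p a ∧ p a ≤ 1)
    (hc : c * (p j * (1 - p i)) ≤ p i * (1 - p j)) (hc1 : c ≤ 1) (hi : i ∈ C) :
    c * considerWeight n p (C.map (Equiv.swap i j).toEmbedding) ≤ considerWeight n p C := by
  by_cases hj : j ∈ C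
  · rw [map_swap_of_mem_of_mem hi hj]
    exact mul_le_of_le_one_left (considerWeight_nonneg hp C) hc1
  · have hij : i ≠ j := ne_of_mem_of_not_mem hi hj
    have hcompl : (insert j (C.erase i))ᶜ.erase i = Cᶜ.erase j := by
      rw [Finset.compl_insert, Finset.compl_erase, Finset.erase_insert_of_ne hij,
        Finset.erase_insert (by simp [hi])]
    rw [map_swap_of_mem_of_notMem hi hj, considerWeight_of_mem_of_notMem p hi hj,
      considerWeight_of_mem_of_notMem p (Finset.mem_insert_self j _)
        (by simp [hij] : i ∉ insert j (C.erase i)),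
      Finset.erase_insert (by simp [hj]), hcompl, ← mul_assoc]
    exact mul_le_mul_of_nonneg_right hc
      (mul_nonneg (Finset.prod_nonneg fun a _ => (hp a).1.le)
        (Finset.prod_nonneg fun a _ => sub_nonneg.mpr (hp a).2))

theorem zConst_pos (hp : ∀ a, 0 < p a ∧ p a ≤ 1) (hkn : k ≤ n) : 0 < zConst n k p :=
  Finset.sum_pos' (fun C _ => considerWeight_nonneg hp C)
    ⟨Finset.univ, by simpa using hkn, considerWeight_univ_pos fun a => (hp a).1⟩

theorem zConst_nonneg (hp : ∀ a, 0 < p a ∧ p a ≤ 1) : 0 ≤ zConst n k p :=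
  Finset.sum_nonneg fun C _ => considerWeight_nonneg hp C

theorem prC_nonneg (hp : ∀ a, 0 < p a ∧ p a ≤ 1) (C : Finset (Fin n)) : 0 ≤ prC n k p C := by
  unfold prC
  split_ifs
  · exact div_nonneg (considerWeight_nonneg hp C) (zConst_nonneg hp)
  · exact le_rfl

theorem prC_of_card_lt (p : Fin n → ℝ) (hC : C.card < k) : prC n k p C = 0 :=
  if_neg hC.not_ge

theorem prC_univ_pos (hp : ∀ a, 0 < p a ∧ p a ≤ 1) (hkn : k ≤ n) :
    0 < prC n k p Finset.univ := by
  rw [prC, if_pos (by simpa using hkn)]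
  exact div_pos (considerWeight_univ_pos fun a => (hp a).1) (zConst_pos hp hkn)

theorem mul_prC_map_swap_le (hp : ∀ a, 0 < p a ∧ p a ≤ 1)
    (hc : c * (p j * (1 - p i)) ≤ p i * (1 - p j)) (hc1 : c ≤ 1) (hi : i ∈ C) :
    c * prC n k p (C.map (Equiv.swap i j).toEmbedding) ≤ prC n k p C := by
  rw [prC, prC, Finset.card_map]
  split_ifs
  · rw [← mul_div_assoc]
    exact div_le_div_of_nonneg_right (mul_considerWeight_map_swap_le hp hc hc1 hi)
      (zConst_nonneg hp)
  · rw [mul_zero]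

theorem prPLCset_topSet (u p : Fin n → ℝ) (i : Fin n) (ℓ : ℕ) :
    prPLCset n k u p (topSet n k i ℓ) = ∑ C, prC n k p C * topProb n k u i ℓ C := by
  simp only [prPLCset, prPLC, topProb, Finset.mul_sum]
  exact Finset.sum_comm

theorem prPLCset_topSet_pos (hp : ∀ a, 0 < p a ∧ p a ≤ 1) (u : Fin n → ℝ) (i : Fin n)
    (hℓ : 1 ≤ ℓ) (hℓk : ℓ ≤ k) (hkn : k ≤ n) : 0 < prPLCset n k u p (topSet n k i ℓ) := by
  rw [prPLCset_topSet]
  exact Finset.sum_pos'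
    (fun C _ => mul_nonneg (prC_nonneg hp C) (topProb_nonneg u i ℓ C))
    ⟨Finset.univ, Finset.mem_univ _,
      mul_pos (prC_univ_pos hp hkn) (topProb_univ_pos u i hℓ hℓk hkn)⟩

theorem mul_prC_mul_topProb_map_swap_le (hp : ∀ a, 0 < p a ∧ p a ≤ 1) (hij : u j ≤ u i)
    (hℓk : ℓ ≤ k) (hc : c * (p j * (1 - p i)) ≤ p i * (1 - p j)) (hc1 : c ≤ 1)
    (C : Finset (Fin n)) :
    c * (prC n k p (C.map (Equiv.swap i j).toEmbedding) *
        topProb n k u j ℓ (C.map (Equiv.swap i j).toEmbedding)) ≤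
      prC n k p C * topProb n k u i ℓ C := by
  rcases lt_or_ge C.card k with hk | hk
  · rw [prC_of_card_lt p hk, prC_of_card_lt p (by rwa [Finset.card_map])]
    simp
  by_cases hi : i ∈ C
  · rw [← mul_assoc]
    exact mul_le_mul (mul_prC_map_swap_le hp hc hc1 hi) (topProb_map_swap_le hij hℓk hk)
      (topProb_nonneg u j ℓ _) (prC_nonneg hp C)
  · rw [topProb_of_notMem u ℓ hi, topProb_of_notMem u ℓ (by simpa using hi)]
    simp

theorem mul_prPLCset_topSet_lt (hp : ∀ a, 0 < p a ∧ p a ≤ 1) (hij : u j < u i) (hℓ : 1 ≤ ℓ)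
    (hℓk : ℓ ≤ k) (hkn : k ≤ n) (hℓn : ℓ < n)
    (hc : c * (p j * (1 - p i)) ≤ p i * (1 - p j)) (hc1 : c ≤ 1) :
    c * prPLCset n k u p (topSet n k j ℓ) < prPLCset n k u p (topSet n k i ℓ) := by
  have hswap : ∑ C, prC n k p C * topProb n k u j ℓ C =
      ∑ C : Finset (Fin n), prC n k p (C.map (Equiv.swap i j).toEmbedding) *
        topProb n k u j ℓ (C.map (Equiv.swap i j).toEmbedding) :=
    ((Equiv.swap i j).finsetCongr.sum_comp fun C => prC n k p C * topProb n k u j ℓ C).symm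
  have htop : topProb n k u j ℓ Finset.univ < topProb n k u i ℓ Finset.univ :=
    topProb_lt_topProb hij hℓ hℓk (by simpa using hkn) (by simpa using hℓn)
      (Finset.mem_univ i) (Finset.mem_univ j)
  rw [prPLCset_topSet, prPLCset_topSet, hswap, Finset.mul_sum]
  refine Finset.sum_lt_sum
    (fun C _ => mul_prC_mul_topProb_map_swap_le hp hij.le hℓk hc hc1 C)
    ⟨Finset.univ, Finset.mem_univ _, ?_⟩
  rw [Finset.map_univ_equiv]
  calc c * (prC n k p Finset.univ * topProb n k u j ℓ Finset.univ)
      ≤ prC n k p Finset.univ * topProb n k u j ℓ Finset.univ :=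
        mul_le_of_le_one_left
          (mul_nonneg (prC_nonneg hp _) (topProb_nonneg u j ℓ _)) hc1
    _ < prC n k p Finset.univ * topProb n k u i ℓ Finset.univ :=
        mul_lt_mul_of_pos_left htop (prC_univ_pos hp hkn)

end Consideration

theorem div_le_of_mul_one_sub_le {x y b c : ℝ} (hc : 0 ≤ c) (hy0 : 0 ≤ y) (hy1 : y ≤ 1)
    (hb0 : 0 ≤ b) (hb1 : b ≤ 1) (hbx : b ≤ x) (hodds : x * (1 - y) ≤ c * (y * (1 - x))) :
    b / (c - c * b + b) ≤ y := by
  have hcb : 0 ≤ c * (1 - b) := mul_nonneg hc (sub_nonneg.mpr hb1)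
  have hmono : b * (1 - y + c * y) ≤ x * (1 - y + c * y) :=
    mul_le_mul_of_nonneg_right hbx (add_nonneg (sub_nonneg.mpr hy1) (mul_nonneg hc hy0))
  exact div_le_of_le_mul₀ (by linarith) hy0 (by linarith)

/-- Lower-bound propagation step: if `u i > u j`, `c = Pr(R_{i≤ℓ}) / Pr(R_{j≤ℓ}) ≤ 1`, and
`b ∈ [0,1)` is a lower bound on `p i`, then `p j ≥ b / (c - c * b + b)`.
The hypothesis `ℓ < n` excludes only `ℓ = k = n`, where every ranking lists all items in its
top `ℓ` positions, so that `c = 1` whatever `p` is. -/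
theorem lower_bound_propagation (n k ℓ : ℕ) (u p : Fin n → ℝ) (i j : Fin n)
    (hp : ∀ a, 0 < p a ∧ p a ≤ 1) (hu : u i > u j)
    (hℓ : 1 ≤ ℓ) (hℓk : ℓ ≤ k) (hkn : k ≤ n) (hℓn : ℓ < n)
    (c : ℝ)
    (hc : c = prPLCset n k u p (topSet n k i ℓ) / prPLCset n k u p (topSet n k j ℓ))
    (hc1 : c ≤ 1)
    (b : ℝ) (hb0 : 0 ≤ b) (hb1 : b < 1) (hbp : b ≤ p i) :
    p j ≥ b / (c - c * b + b) := by
  have hPi := prPLCset_topSet_pos hp u i hℓ hℓk hkn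
  have hPj := prPLCset_topSet_pos hp u j hℓ hℓk hkn
  have hodds : p i * (1 - p j) ≤ c * (p j * (1 - p i)) := by
    by_contra! hlt
    have hratio : c * prPLCset n k u p (topSet n k j ℓ) = prPLCset n k u p (topSet n k i ℓ) := by
      rw [hc, div_mul_cancel₀ _ hPj.ne']
    exact (mul_prPLCset_topSet_lt hp hu hℓ hℓk hkn hℓn hlt.le hc1).ne hratio
  have hc0 : 0 ≤ c := hc ▸ (div_pos hPi hPj).le
  exact div_le_of_mul_one_sub_le hc0 (hp j).1.le (hp j).2 hb0 hb1.le hbp hodds
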